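/- arXiv:2410.00740 — 4 statements merged into one kernel-verified Lean document; each statement's English description precedes it below -/
import Mathlib

section
/- Let 𝒟 be a category with finite limits and 𝒞 a predicate on its objects closed under finite limits. Let T be a comonad on 𝒟 whose underlying functor preserves finite limits, maps every object satisfying 𝒞 to an object satisfying 𝒞, and satisfies the site-morphism condition from (𝒟,𝒞) to (𝒟,𝒞). Assume every split monomorphism of 𝒟 is locally 𝒞-small. Then every split monomorphism of the category Coalgebra T is locally small with respect to the predicate on T-coalgebras 'the carrier object satisfies 𝒞'. -/
open CategoryTheory CategoryTheory.Limits

universe v u w z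

variable {𝒟 : Type u} [Category.{v} 𝒟]

/-- A morphism `p : E ⟶ B` of `𝒟` is locally `𝒞`-small if every morphism from a
`𝒞`-object into `B` admits a pullback of `p` along it with apex satisfying `𝒞`. -/
def LocallySmallMap (𝒞 : 𝒟 → Prop) {E B : 𝒟} (p : E ⟶ B) : Prop :=
  ∀ (A : 𝒟), 𝒞 A → ∀ f : A ⟶ B,
    ∃ (D : 𝒟) (_ : 𝒞 D) (a : D ⟶ E) (b : D ⟶ A), IsPullback a b p f

/-- The site-morphism condition for `G : 𝒟 ⥤ ℱ` from `(𝒟, 𝒞)` to `(ℱ, ℰ)`. -/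
def SiteMorphism {ℱ : Type w} [Category.{z} ℱ] (𝒞 : 𝒟 → Prop) (ℰ : ℱ → Prop) (G : 𝒟 ⥤ ℱ) : Prop :=
  ∀ (D : 𝒟) (E : ℱ), ℰ E → ∀ f : E ⟶ G.obj D,
    ∃ (C : 𝒟) (_ : 𝒞 C) (g : C ⟶ D) (h : E ⟶ G.obj C), h ≫ G.map g = f

/-- A predicate on objects is closed under finite limits: the terminal object satisfies it,
and every cospan of objects satisfying it admits a pullback square with apex satisfying it. -/
def ClosedUnderFiniteLimits [HasTerminal 𝒟] (𝒞 : 𝒟 → Prop) : Prop :=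
  𝒞 (⊤_ 𝒟) ∧ ∀ {X Y Z : 𝒟} (f : X ⟶ Z) (g : Y ⟶ Z), 𝒞 X → 𝒞 Y → 𝒞 Z →
    ∃ (P : 𝒟) (_ : 𝒞 P) (a : P ⟶ X) (b : P ⟶ Y), IsPullback a b f g

/-- Every split monomorphism of the category of coalgebras is locally
small with respect to the predicate "the carrier satisfies `𝒞`". -/
theorem splitMono_locallySmall_coalgebra [HasFiniteLimits 𝒟] (𝒞 : 𝒟 → Prop)
    (hclosed : ClosedUnderFiniteLimits 𝒞)
    (T : Comonad 𝒟) [PreservesFiniteLimits T.toFunctor]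
    (hmaps : ∀ X : 𝒟, 𝒞 X → 𝒞 (T.obj X))
    (hsite : SiteMorphism 𝒞 𝒞 T.toFunctor)
    (hsplit : ∀ {E B : 𝒟} (p : E ⟶ B), IsSplitMono p → LocallySmallMap 𝒞 p) :
    ∀ {E B : Comonad.Coalgebra T} (p : E ⟶ B), IsSplitMono p →
      LocallySmallMap (fun A : Comonad.Coalgebra T => 𝒞 A.A) p := by
  intro E B p hp A hA f
  have hpf : IsSplitMono p.f := inferInstanceAs (IsSplitMono (T.forget.map p))
  obtain ⟨D, hD, a, b, hab⟩ := hsplit p.f hpf A.A hA f.f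
  have hlim : HasLimit (cospan p f) := Comonad.forget_creates_limits_of_comonad_preserves (cospan p f)
  have hpb : HasPullback p f := hlim
  have hpres : PreservesLimit (cospan p f) T.forget := inferInstance
  have hQ := IsPullback.of_hasPullback p f
  have hQ' : IsPullback (pullback.fst p f).f (pullback.snd p f).f p.f f.f := hQ.map T.forget
  let e : D ≅ (pullback p f).A := hab.isoIsPullback _ _ hQ'
  have e1 : e.hom ≫ (pullback.fst p f).f = a := hab.isoIsPullback_hom_fst _ _ hQ'
  have e2 : e.hom ≫ (pullback.snd p f).f = b := hab.isoIsPullback_hom_snd _ _ hQ'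
  let D' : Comonad.Coalgebra T :=
    { A := D
      a := e.hom ≫ (pullback p f).a ≫ T.map e.inv
      counit := by
        have := T.ε.naturality e.inv
        simp only [Category.assoc]
        rw [this]
        simp [Comonad.Coalgebra.counit_assoc]
      coassoc := by
        have := T.δ.naturality e.inv
        simp only [Category.assoc]
        rw [this]
        simp only [Comonad.Coalgebra.coassoc_assoc, Functor.comp_map, ← Functor.map_comp,
          Iso.inv_hom_id_assoc] }
  let i : D' ≅ pullback p f := Comonad.Coalgebra.isoMk e (by
    simp only [D', Category.assoc, ← Functor.map_comp, Iso.inv_hom_id]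
    simp)
  refine ⟨D', hD, i.hom ≫ pullback.fst p f, i.hom ≫ pullback.snd p f, ?_⟩
  exact hQ.of_iso i.symm (Iso.refl _) (Iso.refl _) (Iso.refl _) (by simp) (by simp) (by simp)
    (by simp)
end

section
/- Let 𝒟 be a category with finite limits, 𝒞 a predicate on its objects, and T a comonad on 𝒟 whose underlying functor preserves finite limits, maps every object satisfying 𝒞 to an object satisfying 𝒞, and satisfies the site-morphism condition from (𝒟,𝒞) to (𝒟,𝒞). Assume every split monomorphism of 𝒟 is locally 𝒞-small. Then the forgetful functor U : Coalgebra T ⥤ 𝒟 satisfies the site-morphism condition from (Coalgebra T, 'carrier satisfies 𝒞') to (𝒟, 𝒞): for every T-coalgebra B, every object A of 𝒟 with 𝒞 A, and every morphism f : A ⟶ U.obj B, there exist a T-coalgebra B' whose carrier satisfies 𝒞, a coalgebra morphism g : B' ⟶ B, and a morphism h : A ⟶ U.obj B' with h ≫ U.map g = f. -/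
open CategoryTheory CategoryTheory.Limits

universe v u w z

variable {𝒟 : Type u} [Category.{v} 𝒟]

/-- The forgetful functor from coalgebras satisfies the site-morphism
condition from `(Coalgebra T, carrier satisfies 𝒞)` to `(𝒟, 𝒞)`. -/
theorem forget_siteMorphism [HasFiniteLimits 𝒟] (𝒞 : 𝒟 → Prop)
    (T : Comonad 𝒟) [PreservesFiniteLimits T.toFunctor]
    (hmaps : ∀ X : 𝒟, 𝒞 X → 𝒞 (T.obj X))
    (hsite : SiteMorphism 𝒞 𝒞 T.toFunctor)
    (hsplit : ∀ {E B : 𝒟} (p : E ⟶ B), IsSplitMono p → LocallySmallMap 𝒞 p) :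
    SiteMorphism (fun A : Comonad.Coalgebra T => 𝒞 A.A) 𝒞 T.forget := by
  intro B A hA f
  obtain ⟨C, hC, g, h, hh⟩ := hsite B.A A hA (f ≫ B.a)
  have hs : IsSplitMono B.a := IsSplitMono.mk' ⟨T.ε.app B.A, B.counit⟩
  obtain ⟨D, hD, a, b, pb⟩ := hsplit B.a hs (T.obj C) (hmaps C hC) (T.map g)
  have pb1 := pb.map T.toFunctor
  have pb2 := pb1.map T.toFunctor
  have w : (a ≫ B.a) ≫ T.map B.a = (b ≫ T.δ.app C) ≫ T.map (T.map g) := by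
    have e := T.δ.naturality g
    simp only [Functor.comp_map] at e
    rw [Category.assoc, Category.assoc, ← e, ← B.coassoc, ← Category.assoc, pb.w,
      Category.assoc]
  let d : D ⟶ T.obj D := pb1.lift (a ≫ B.a) (b ≫ T.δ.app C) w
  have da : d ≫ T.map a = a ≫ B.a := pb1.lift_fst _ _ _
  have db : d ≫ T.map b = b ≫ T.δ.app C := pb1.lift_snd _ _ _
  have na : T.δ.app D ≫ T.map (T.map a) = T.map a ≫ T.δ.app B.A := (T.δ.naturality a).symm
  have nb : T.δ.app D ≫ T.map (T.map b) = T.map b ≫ T.δ.app (T.obj C) :=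
    (T.δ.naturality b).symm
  have ea : T.ε.app D ≫ a = T.map a ≫ T.ε.app B.A := (T.ε.naturality a).symm
  have eb : T.ε.app D ≫ b = T.map b ≫ T.ε.app (T.obj C) := (T.ε.naturality b).symm
  have hcounit : d ≫ T.ε.app D = 𝟙 D := by
    apply pb.hom_ext
    · rw [Category.assoc, ea, reassoc_of% da, B.counit]; simp
    · rw [Category.assoc, eb, reassoc_of% db, T.left_counit]; simp
  have hcoassoc : d ≫ T.δ.app D = d ≫ T.map d := by
    apply pb2.hom_ext
    · rw [Category.assoc, Category.assoc, na, reassoc_of% da, ← T.map_comp, da, T.map_comp,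
        reassoc_of% da, B.coassoc]
    · rw [Category.assoc, Category.assoc, nb, reassoc_of% db, ← T.map_comp, db, T.map_comp,
        reassoc_of% db, T.coassoc]
  exact ⟨⟨D, d, hcounit, hcoassoc⟩, hD, ⟨a, da⟩, pb.lift f h hh.symm, pb.lift_fst _ _ _⟩
end

section
/- Let 𝒟 be a category with finite limits that has a subobject classifier with truth morphism t : ⊤ ⟶ Ω. Let 𝒞 be a predicate on the objects of 𝒟 such that the terminal object satisfies 𝒞, Ω satisfies 𝒞, and for every cospan X ⟶ Z ⟵ Y with 𝒞 X, 𝒞 Y, 𝒞 Z there exist an object P with 𝒞 P and a pullback square over the cospan with apex P. Then every monomorphism m : E ⟶ B of 𝒟 is locally 𝒞-small. -/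
open CategoryTheory CategoryTheory.Limits

universe v u w z

variable {𝒟 : Type u} [Category.{v} 𝒟]

/-- In a category with finite limits and a subobject classifier
`t : ⊤ ⟶ Ω`, if `𝒞` holds of the terminal object and of `Ω` and is closed under
pullbacks of cospans of `𝒞`-objects, then every monomorphism is locally `𝒞`-small. -/
theorem mono_locallySmallMap [HasFiniteLimits 𝒟]
    (Ω : 𝒟) (t : ⊤_ 𝒟 ⟶ Ω) [Mono t]
    (hclassifier : ∀ {E B : 𝒟} (m : E ⟶ B), Mono m →
      ∃! χ : B ⟶ Ω, IsPullback (terminal.from E) m t χ)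
    (𝒞 : 𝒟 → Prop) (hterm : 𝒞 (⊤_ 𝒟)) (hΩ : 𝒞 Ω)
    (hpb : ∀ {X Y Z : 𝒟} (f : X ⟶ Z) (g : Y ⟶ Z), 𝒞 X → 𝒞 Y → 𝒞 Z →
      ∃ (P : 𝒟) (_ : 𝒞 P) (a : P ⟶ X) (b : P ⟶ Y), IsPullback a b f g) :
    ∀ {E B : 𝒟} (m : E ⟶ B), Mono m → LocallySmallMap 𝒞 m := by
  intro E B m hm A hA f
  obtain ⟨χ, hχ, -⟩ := hclassifier m hm
  obtain ⟨P, hP, a, b, h⟩ := hpb t (f ≫ χ) hterm hA hΩ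
  have w : a ≫ t = (b ≫ f) ≫ χ := by rw [h.w, Category.assoc]
  refine ⟨P, hP, hχ.lift a (b ≫ f) w, b, ?_⟩
  refine IsPullback.of_right (h₁₂ := terminal.from E) (v₁₃ := t) (h₂₂ := χ) ?_
    (hχ.lift_snd a (b ≫ f) w) hχ
  rw [hχ.lift_fst]
  exact h
end

section
/- Let 𝒟 and ℱ be categories such that ℱ has pullbacks, let 𝒞 be a predicate on the objects of 𝒟 and ℰ a predicate on the objects of ℱ such that for every cospan in ℱ between objects satisfying ℰ there is a pullback square whose apex satisfies ℰ. Let G : 𝒟 ⥤ ℱ preserve pullbacks, satisfy 𝒞 X → ℰ (G.obj X) for every object X, and satisfy the site-morphism condition from (𝒟,𝒞) to (ℱ,ℰ). Then G maps every locally 𝒞-small morphism of 𝒟 to a locally ℰ-small morphism of ℱ. -/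
open CategoryTheory CategoryTheory.Limits

universe v u w z

variable {𝒟 : Type u} [Category.{v} 𝒟]

/-- A pullback-preserving site morphism taking `𝒞`-objects to
`ℰ`-objects maps locally `𝒞`-small morphisms to locally `ℰ`-small morphisms. -/
theorem siteMorphism_preserves_locallySmall {ℱ : Type w} [Category.{z} ℱ]
    [HasPullbacks ℱ] (𝒞 : 𝒟 → Prop) (ℰ : ℱ → Prop)
    (hℰ : ∀ {X Y Z : ℱ} (f : X ⟶ Z) (g : Y ⟶ Z), ℰ X → ℰ Y → ℰ Z →
      ∃ (P : ℱ) (_ : ℰ P) (a : P ⟶ X) (b : P ⟶ Y), IsPullback a b f g)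
    (G : 𝒟 ⥤ ℱ) [PreservesLimitsOfShape WalkingCospan G]
    (hobj : ∀ X : 𝒟, 𝒞 X → ℰ (G.obj X))
    (hsite : SiteMorphism 𝒞 ℰ G) :
    ∀ {E B : 𝒟} (p : E ⟶ B), LocallySmallMap 𝒞 p → LocallySmallMap ℰ (G.map p) := by
  intro E B p hp A hA f
  obtain ⟨C, hC, g, h, rfl⟩ := hsite B A hA f
  obtain ⟨D, hD, a, b, hab⟩ := hp C hC g
  obtain ⟨P, hP, c, d, hcd⟩ := hℰ (G.map b) h (hobj D hD) hA (hobj C hC)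
  exact ⟨P, hP, c ≫ G.map a, d, hcd.flip.paste_vert (hab.map G).flip |>.flip⟩
end
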